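/- Let u, v, w ∈ ℂ be such that u − v ∉ Λ, u − w ∉ Λ, and v − w ∉ Λ. Then (ζ₂(u−w) − ζ₂(v−w))·℘₂(u−v) = −(ζ₂(u−v) − ζ₂(u−w))·℘₂(v−w) − (1/2)(f₂′(u−v) − f₂′(v−w)). -/

import Mathlib

open Complex Filter MeasureTheory Finset

noncomputable section

/-- The period lattice with half-periods `ℓ` and `iδ`. -/
def Lambda (ℓ δ : ℝ) : Set ℂ :=
  {z | ∃ n m : ℤ, z = 2 * (n : ℂ) * (ℓ : ℂ) + 2 * (m : ℂ) * ((δ : ℂ) * Complex.I)}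

/-- The nonzero lattice points. -/
def latticePts (ℓ δ : ℝ) : Set ℂ := Lambda ℓ δ \ {0}

/-- Weierstrass ℘-function with half-periods `ℓ`, `iδ`. -/
def wP (ℓ δ : ℝ) (z : ℂ) : ℂ :=
  1 / z ^ 2 + ∑' ω : latticePts ℓ δ, (1 / (z - (ω : ℂ)) ^ 2 - 1 / (ω : ℂ) ^ 2)

/-- Weierstrass ζ-function with half-periods `ℓ`, `iδ`. -/
def wZeta (ℓ δ : ℝ) (z : ℂ) : ℂ :=
  1 / z + ∑' ω : latticePts ℓ δ, (1 / (z - (ω : ℂ)) + 1 / (ω : ℂ) + z / (ω : ℂ) ^ 2)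

def zeta2 (ℓ δ : ℝ) (z : ℂ) : ℂ :=
  wZeta ℓ δ z - (wZeta ℓ δ ((δ : ℂ) * Complex.I) / ((δ : ℂ) * Complex.I)) * z

def wp2 (ℓ δ : ℝ) (z : ℂ) : ℂ :=
  wP ℓ δ z + wZeta ℓ δ ((δ : ℂ) * Complex.I) / ((δ : ℂ) * Complex.I)

def f2 (ℓ δ : ℝ) (z : ℂ) : ℂ := (zeta2 ℓ δ z) ^ 2 - wp2 ℓ δ z

def zeta1 (ℓ δ : ℝ) (z : ℂ) : ℂ :=
  wZeta ℓ δ z - (wZeta ℓ δ (ℓ : ℂ) / (ℓ : ℂ)) * z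

/-- Bilinear dot product on `ℂ³` (no conjugation). -/
def dot3 (s t : Fin 3 → ℂ) : ℂ := s 0 * t 0 + s 1 * t 1 + s 2 * t 2

/-- Cross product on `ℂ³`. -/
def cross3 (s t : Fin 3 → ℂ) : Fin 3 → ℂ :=
  ![s 1 * t 2 - s 2 * t 1, s 2 * t 0 - s 0 * t 2, s 0 * t 1 - s 1 * t 0]

/-- The principal-value integral operator `T`. -/
def pvT (ℓ δ : ℝ) (f : ℝ → Fin 3 → ℂ) (x : ℝ) : Fin 3 → ℂ := fun i =>
  (1 / (Real.pi : ℂ)) * limUnder (nhdsWithin (0 : ℝ) (Set.Ioi 0)) (fun ε : ℝ =>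
    ∫ y in {y : ℝ | y ∈ Set.Icc (-ℓ) ℓ ∧ ε ≤ |y - x|},
      zeta1 ℓ δ ((y : ℂ) - (x : ℂ)) * f y i)

/-- The integral operator `T̃`. -/
def tilT (ℓ δ : ℝ) (f : ℝ → Fin 3 → ℂ) (x : ℝ) : Fin 3 → ℂ := fun i =>
  (1 / (Real.pi : ℂ)) * ∫ y in Set.Icc (-ℓ) ℓ,
      zeta1 ℓ δ ((y : ℂ) - (x : ℂ) + (δ : ℂ) * Complex.I) * f y i

/-
Fix `s = a + b` and set `D(a) = (ζ(s) - ζ(a) - ζ(s - a))² - (℘(s) + ℘(a) + ℘(s - a))`. The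
quasi-periods of `ζ` cancel, so `D` is elliptic in `a`; its double pole at `a = 0` cancels as well,
with limit `0`, and the symmetry `a ↦ s - a` disposes of the poles at `s + Λ`. Liouville's theorem
gives `D = 0`, the Frobenius–Stickelberger identity. Differentiating it in `a` at fixed `s` yields
`(ζ(a + b) - ζ(a) - ζ(b)) (℘(a) - ℘(b)) = (℘'(a) - ℘'(b)) / 2`, and with `a = u - v`, `b = v - w`
this is the three-point identity: the linear correction of `ζ` drops out of
`ζ(a + b) - ζ(a) - ζ(b)`, the constant correction of `℘` out of `℘(a) - ℘(b)`.
-/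

open scoped Topology PeriodPair

section Liouville

lemma mem_codiscrete_iff_forall_mem_nhdsNE {X : Type*} [TopologicalSpace X] {U : Set X} :
    U ∈ codiscrete X ↔ ∀ z, U ∈ 𝓝[≠] z := by
  simp only [mem_codiscrete, disjoint_principal_right, compl_compl]

variable {E : Type*} [NormedAddCommGroup E] [NormedSpace ℂ E] [CompleteSpace E]

lemma differentiable_indicator_of_tendsto_zero {f : ℂ → E} {U : Set ℂ}
    (hU : U ∈ codiscrete ℂ) (hf : DifferentiableOn ℂ f U)
    (hlim : ∀ z ∉ U, Tendsto f (𝓝[≠] z) (𝓝 0)) : Differentiable ℂ (U.indicator f) := by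
  have hUo : IsOpen U := (mem_codiscrete'.mp hU).1
  have hdiff : ∀ z ∈ U, DifferentiableAt ℂ (U.indicator f) z := fun z hz ↦
    (hf.differentiableAt (hUo.mem_nhds hz)).congr_of_eventuallyEq
      (Set.eqOn_indicator.eventuallyEq_of_mem (hUo.mem_nhds hz))
  intro z
  by_cases hz : z ∈ U
  · exact hdiff z hz
  have hUz : U ∈ 𝓝[≠] z := mem_codiscrete_iff_forall_mem_nhdsNE.mp hU z
  have hcont : ContinuousAt (U.indicator f) z := by
    rw [continuousAt_iff_punctured_nhds, Set.indicator_of_notMem hz]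
    exact (hlim z hz).congr' (Set.eqOn_indicator.symm.eventuallyEq_of_mem hUz)
  exact (analyticAt_of_differentiable_on_punctured_nhds_of_continuousAt
    (mem_of_superset hUz hdiff) hcont).differentiableAt

theorem eqOn_zero_of_periodic_of_tendsto_zero
    (Λ : Submodule ℤ ℂ) [DiscreteTopology Λ] [IsZLattice ℝ Λ] {f : ℂ → E} {U : Set ℂ}
    (hU : U ∈ codiscrete ℂ) (hUΛ : ∀ z ∈ U, ∀ l ∈ Λ, z + l ∈ U) (hne : Uᶜ.Nonempty)
    (hf : DifferentiableOn ℂ f U) (hfΛ : ∀ z ∈ U, ∀ l ∈ Λ, f (z + l) = f z)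
    (hlim : ∀ z ∉ U, Tendsto f (𝓝[≠] z) (𝓝 0)) : Set.EqOn f 0 U := by
  have hdiff := differentiable_indicator_of_tendsto_zero hU hf hlim
  have hper : ∀ z, ∀ l ∈ Λ, U.indicator f (z + l) = U.indicator f z := by
    intro z l hl
    by_cases hz : z ∈ U
    · rw [Set.indicator_of_mem hz, Set.indicator_of_mem (hUΛ z hz l hl), hfΛ z hz l hl]
    · have hzl : z + l ∉ U := fun h ↦ hz (by simpa using hUΛ _ h _ (neg_mem hl))
      rw [Set.indicator_of_notMem hz, Set.indicator_of_notMem hzl]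
  have hbdd : Bornology.IsBounded (Set.range (U.indicator f)) :=
    (IsZLattice.isCompact_range_of_periodic Λ _ hdiff.continuous hper).isBounded
  obtain ⟨z₀, hz₀⟩ := hne
  intro z hz
  rw [← Set.indicator_of_mem hz f, hdiff.apply_eq_apply_of_bounded hbdd z z₀,
    Set.indicator_of_notMem hz₀, Pi.zero_apply]

end Liouville

section WeierstrassZeta

lemma norm_one_div_sub_add_one_div_add_div_sq_le {𝕜 : Type*} [NormedField 𝕜]
    {z l : 𝕜} (h : 2 * ‖z‖ < ‖l‖) :
    ‖1 / (z - l) + 1 / l + z / l ^ 2‖ ≤ 2 * ‖z‖ ^ 2 * ‖l‖⁻¹ ^ 3 := by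
  have hl : 0 < ‖l‖ := by linarith [norm_nonneg z]
  have hzl : ‖l‖ / 2 ≤ ‖z - l‖ := by
    rw [norm_sub_rev]
    linarith [norm_sub_norm_le l z]
  have hl0 : l ≠ 0 := norm_pos_iff.mp hl
  have hzl0 : z - l ≠ 0 := norm_pos_iff.mp (by linarith)
  calc ‖1 / (z - l) + 1 / l + z / l ^ 2‖ = ‖z ^ 2 / (l ^ 2 * (z - l))‖ := by
        congr 1
        field_simp
        ring
    _ = ‖z‖ ^ 2 / (‖l‖ ^ 2 * ‖z - l‖) := by simp only [norm_div, norm_mul, norm_pow]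
    _ ≤ ‖z‖ ^ 2 / (‖l‖ ^ 2 * (‖l‖ / 2)) := by gcongr
    _ = 2 * ‖z‖ ^ 2 * ‖l‖⁻¹ ^ 3 := by field_simp

lemma hasDerivAt_one_div_sub_add_one_div_add_div_sq {𝕜 : Type*}
    [NontriviallyNormedField 𝕜] {z l : 𝕜} (h : z ≠ l) :
    HasDerivAt (fun z ↦ 1 / (z - l) + 1 / l + z / l ^ 2) (-(1 / (z - l) ^ 2 - 1 / l ^ 2)) z := by
  have hinv := ((hasDerivAt_id z).sub_const l).inv (sub_ne_zero.mpr h)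
  simpa [neg_div, sub_eq_add_neg, add_comm] using
    (hinv.add_const (1 / l)).fun_add ((hasDerivAt_id z).div_const (l ^ 2))

variable (L : PeriodPair)

/-- The Weierstrass zeta function without its principal part `1 / z` at the origin. -/
def weierstrassZetaRegular (z : ℂ) : ℂ :=
  ∑' l : L.lattice, if l.1 = 0 then 0 else 1 / (z - l) + 1 / l.1 + z / l.1 ^ 2

/-- The Weierstrass zeta function of the lattice of periods `L`, the odd primitive of `-℘[L]`. Its
values at lattice points are junk. -/
def weierstrassZeta (z : ℂ) : ℂ := 1 / z + weierstrassZetaRegular L z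

lemma hasSum_weierstrassZetaRegular (z : ℂ) :
    HasSum (fun l : L.lattice ↦ if l.1 = 0 then 0 else 1 / (z - l) + 1 / l.1 + z / l.1 ^ 2)
      (weierstrassZetaRegular L z) := by
  have hbound : Summable fun l : L.lattice ↦ 2 * ‖z‖ ^ 2 * ‖l‖⁻¹ ^ 3 :=
    (ZLattice.summable_norm_pow_inv _ _ (by simp)).mul_left _
  refine Summable.hasSum (hbound.of_norm_bounded_eventually ?_)
  have hlarge : ∀ᶠ l : L.lattice in cofinite, 2 * ‖z‖ < ‖l‖ := by
    rw [← cocompact_eq_cofinite]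
    exact (tendsto_norm_cocompact_atTop (E := L.lattice)).eventually_gt_atTop _
  filter_upwards [hlarge] with l hl
  split_ifs
  · rw [norm_zero]
    positivity
  · exact norm_one_div_sub_add_one_div_add_div_sq_le hl

lemma hasDerivAt_weierstrassZetaRegular {z : ℂ} (hz : z ∈ (L.lattice \ {0} : Set ℂ)ᶜ) :
    HasDerivAt (weierstrassZetaRegular L) (-℘[L - (0 : ℂ)] z) z := by
  refine hasDerivAt_of_tendstoLocallyUniformlyOn (g' := -℘[L - (0 : ℂ)])
    L.isOpen_compl_lattice_sdiff
    (L.hasSumLocallyUniformly_weierstrassPExcept 0).tendstoLocallyUniformlyOn.neg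
    (.of_forall fun s w hw ↦ ?_) (fun w _ ↦ hasSum_weierstrassZetaRegular L w) hz
  simp only [Pi.neg_apply, ← Finset.sum_neg_distrib]
  refine .fun_sum fun l _ ↦ ?_
  split_ifs with hl
  · simpa using hasDerivAt_const w (0 : ℂ)
  · exact hasDerivAt_one_div_sub_add_one_div_add_div_sq fun h ↦ hw ⟨h ▸ l.2, h ▸ hl⟩

lemma weierstrassZetaRegular_zero : weierstrassZetaRegular L 0 = 0 := by
  simp [weierstrassZetaRegular]

lemma hasDerivAt_weierstrassZetaRegular_zero : HasDerivAt (weierstrassZetaRegular L) 0 0 := by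
  simpa using hasDerivAt_weierstrassZetaRegular L (z := 0) fun h ↦ h.2 rfl

lemma weierstrassP_eq_one_div_sq_add (z : ℂ) : ℘[L] z = 1 / z ^ 2 + ℘[L - (0 : ℂ)] z := by
  simpa [add_comm] using (L.weierstrassPExcept_add 0 z).symm

lemma hasDerivAt_weierstrassZeta {z : ℂ} (hz : z ∉ L.lattice) :
    HasDerivAt (weierstrassZeta L) (-℘[L] z) z := by
  have hz0 : z ≠ 0 := fun h ↦ hz (h ▸ zero_mem _)
  have hreg := hasDerivAt_weierstrassZetaRegular L (z := z) fun h ↦ hz h.1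
  change HasDerivAt (fun z ↦ 1 / z + weierstrassZetaRegular L z) _ z
  simpa only [weierstrassP_eq_one_div_sq_add, one_div, neg_add] using
    (hasDerivAt_inv hz0).fun_add hreg

lemma hasDerivAt_weierstrassP {z : ℂ} (hz : z ∉ L.lattice) : HasDerivAt ℘[L] (℘'[L] z) z := by
  rw [← L.deriv_weierstrassP]
  exact (L.analyticOnNhd_weierstrassP z hz).differentiableAt.hasDerivAt

lemma exists_weierstrassZeta_add_eq {l : ℂ} (hl : l ∈ L.lattice) :
    ∃ η, ∀ z ∉ L.lattice, weierstrassZeta L (z + l) = weierstrassZeta L z + η := by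
  have hadd : ∀ z ∉ L.lattice, z + l ∉ L.lattice := fun z hz h ↦
    hz ((L.lattice.add_mem_iff_left hl).mp h)
  have hshift : ∀ z ∉ L.lattice,
      HasDerivAt (fun z ↦ weierstrassZeta L (z + l)) (-℘[L] z) z := fun z hz ↦ by
    simpa only [L.weierstrassP_add_coe z ⟨l, hl⟩] using
      (hasDerivAt_weierstrassZeta L (hadd z hz)).comp_add_const z l
  have hcount : (L.lattice : Set ℂ).Countable := Set.countable_coe_iff.mp
    (inferInstanceAs (Countable L.lattice))
  have hconn : IsPreconnected (L.lattice : Set ℂ)ᶜ :=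
    (hcount.isConnected_compl_of_one_lt_rank (by simp)).isPreconnected
  exact L.isClosed_lattice.isOpen_compl.exists_eq_add_of_deriv_eq hconn
    (fun z hz ↦ (hshift z hz).differentiableAt.differentiableWithinAt)
    (fun z hz ↦ (hasDerivAt_weierstrassZeta L hz).differentiableAt.differentiableWithinAt)
    (fun z hz ↦ (hshift z hz).deriv.trans (hasDerivAt_weierstrassZeta L hz).deriv.symm)

end WeierstrassZeta

section FrobeniusStickelberger

variable (L : PeriodPair) (s : ℂ)

/-- The points `a` at which both terms of the decomposition `s = a + (s - a)` avoid the lattice. -/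
def regularSummands : Set ℂ := {a | a ∉ L.lattice ∧ s - a ∉ L.lattice}

/-- The difference of the two sides of the Frobenius–Stickelberger identity
`(ζ(a + b) - ζ(a) - ζ(b))² = ℘(a + b) + ℘(a) + ℘(b)`, as a function of `a` for a fixed sum
`s = a + b`. -/
def stickelbergerDefect (a : ℂ) : ℂ :=
  (weierstrassZeta L s - weierstrassZeta L a - weierstrassZeta L (s - a)) ^ 2
    - (℘[L] s + ℘[L] a + ℘[L] (s - a))

lemma regularSummands_mem_codiscrete : regularSummands L s ∈ codiscrete ℂ := by
  have hΛ : ∀ z, (L.lattice : Set ℂ)ᶜ ∈ 𝓝[≠] z := fun z ↦ by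
    filter_upwards [nhdsWithin_le_nhds (L.compl_lattice_sdiff_singleton_mem_nhds z),
      self_mem_nhdsWithin] with w hw hwz hwΛ
    exact hw ⟨hwΛ, hwz⟩
  refine mem_codiscrete_iff_forall_mem_nhdsNE.mpr fun z ↦ ?_
  have hsub : Tendsto (s - ·) (𝓝[≠] z) (𝓝[≠] (s - z)) := map_subLeft_nhdsNE.le
  exact inter_mem (hΛ z) (hsub (hΛ (s - z)))

variable {L s}

lemma add_mem_regularSummands {a l : ℂ} (ha : a ∈ regularSummands L s) (hl : l ∈ L.lattice) :
    a + l ∈ regularSummands L s := by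
  refine ⟨fun h ↦ ha.1 ((L.lattice.add_mem_iff_left hl).mp h), fun h ↦ ha.2 ?_⟩
  have hsub : s - (a + l) + l = s - a := by ring
  exact hsub ▸ add_mem h hl

lemma hasDerivAt_weierstrassZeta_const_sub {a : ℂ} (ha : s - a ∉ L.lattice) :
    HasDerivAt (fun a ↦ weierstrassZeta L (s - a)) (℘[L] (s - a)) a := by
  simpa using (hasDerivAt_weierstrassZeta L ha).comp_const_sub s a

lemma hasDerivAt_stickelbergerDefect {a : ℂ} (ha : a ∈ regularSummands L s) :
    HasDerivAt (stickelbergerDefect L s)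
      (2 * (weierstrassZeta L s - weierstrassZeta L a - weierstrassZeta L (s - a))
        * (℘[L] a - ℘[L] (s - a)) - (℘'[L] a - ℘'[L] (s - a))) a := by
  have hζ := ((hasDerivAt_weierstrassZeta L ha.1).const_sub (weierstrassZeta L s)).sub
    (hasDerivAt_weierstrassZeta_const_sub ha.2)
  have hP := ((hasDerivAt_weierstrassP L ha.1).const_add (℘[L] s)).add
    ((hasDerivAt_weierstrassP L ha.2).comp_const_sub s a)
  refine ((hζ.pow 2).sub hP).congr_deriv ?_
  simp only [Nat.cast_ofNat, Nat.add_one_sub_one, pow_one, Pi.sub_apply]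
  ring

lemma stickelbergerDefect_sub (a : ℂ) :
    stickelbergerDefect L s (s - a) = stickelbergerDefect L s a := by
  simp only [stickelbergerDefect, sub_sub_cancel]
  ring

lemma stickelbergerDefect_add {a l : ℂ} (ha : a ∈ regularSummands L s) (hl : l ∈ L.lattice) :
    stickelbergerDefect L s (a + l) = stickelbergerDefect L s a := by
  obtain ⟨η, hη⟩ := exists_weierstrassZeta_add_eq L hl
  have hsub : s - a = s - (a + l) + l := by ring
  have hζ : weierstrassZeta L (s - a) = weierstrassZeta L (s - (a + l)) + η := by
    rw [hsub, hη _ (add_mem_regularSummands ha hl).2]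
  have hP : ℘[L] (s - a) = ℘[L] (s - (a + l)) := by
    rw [hsub, L.weierstrassP_add_coe _ ⟨l, hl⟩]
  simp only [stickelbergerDefect, hζ, hP, hη a ha.1, L.weierstrassP_add_coe a ⟨l, hl⟩]
  ring

-- The two poles `1 / a ^ 2`, of the square and of `℘[L] a`, cancel.
lemma stickelbergerDefect_eq_of_ne_zero {a : ℂ} (ha : a ≠ 0) :
    stickelbergerDefect L s a =
      (weierstrassZeta L (s - a) - weierstrassZeta L s + weierstrassZetaRegular L a) ^ 2
        + 2 * ((weierstrassZeta L (s - a) - weierstrassZeta L s) / a)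
        + 2 * (weierstrassZetaRegular L a / a)
        - (℘[L] s + ℘[L - (0 : ℂ)] a + ℘[L] (s - a)) := by
  have hζ : weierstrassZeta L a = 1 / a + weierstrassZetaRegular L a := rfl
  simp only [stickelbergerDefect, hζ, weierstrassP_eq_one_div_sq_add L a]
  field_simp
  ring

lemma tendsto_stickelbergerDefect_zero (hs : s ∉ L.lattice) :
    Tendsto (stickelbergerDefect L s) (𝓝[≠] 0) (𝓝 0) := by
  have hs0 : s - 0 ∉ L.lattice := by rwa [sub_zero]
  have hζ' := hasDerivAt_weierstrassZeta_const_sub hs0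
  have hζ : Tendsto (fun a ↦ weierstrassZeta L (s - a)) (𝓝[≠] 0) (𝓝 (weierstrassZeta L s)) := by
    simpa only [sub_zero] using hζ'.continuousAt.continuousWithinAt.tendsto
  have hζslope : Tendsto (fun a ↦ (weierstrassZeta L (s - a) - weierstrassZeta L s) / a)
      (𝓝[≠] 0) (𝓝 (℘[L] s)) := by
    simpa only [slope_fun_def_field, sub_zero] using hζ'.tendsto_slope
  have hreg' := hasDerivAt_weierstrassZetaRegular_zero L
  have hreg : Tendsto (weierstrassZetaRegular L) (𝓝[≠] 0) (𝓝 0) := by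
    simpa only [weierstrassZetaRegular_zero] using
      hreg'.continuousAt.continuousWithinAt.tendsto
  have hregslope : Tendsto (fun a ↦ weierstrassZetaRegular L a / a) (𝓝[≠] 0) (𝓝 0) := by
    simpa only [slope_fun_def_field, sub_zero, weierstrassZetaRegular_zero] using
      hreg'.tendsto_slope
  have hPreg : Tendsto ℘[L - (0 : ℂ)] (𝓝[≠] 0) (𝓝 0) := by
    simpa only [L.weierstrassPExcept_zero] using
      (L.analyticAt_weierstrassPExcept 0).continuousAt.continuousWithinAt.tendsto
  have hPcont := ((hasDerivAt_weierstrassP L hs0).comp_const_sub s 0).continuousAt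
  have hP : Tendsto (fun a ↦ ℘[L] (s - a)) (𝓝[≠] 0) (𝓝 (℘[L] s)) := by
    simpa only [sub_zero] using hPcont.continuousWithinAt.tendsto
  have hlim := (((((hζ.sub_const (weierstrassZeta L s)).add hreg).pow 2).add
    (hζslope.const_mul 2)).add (hregslope.const_mul 2)).sub
      ((hPreg.const_add (℘[L] s)).add hP)
  have hvalue : (weierstrassZeta L s - weierstrassZeta L s + 0) ^ 2 + 2 * ℘[L] s + 2 * 0
      - (℘[L] s + 0 + ℘[L] s) = 0 := by ring
  rw [hvalue] at hlim
  exact hlim.congr' (eventually_nhdsWithin_of_forall fun a ha ↦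
    (stickelbergerDefect_eq_of_ne_zero ha).symm)

lemma tendsto_stickelbergerDefect_of_mem_lattice (hs : s ∉ L.lattice) {l : ℂ}
    (hl : l ∈ L.lattice) : Tendsto (stickelbergerDefect L s) (𝓝[≠] l) (𝓝 0) := by
  have hshift : Tendsto (· - l) (𝓝[≠] l) (𝓝[≠] 0) :=
    map_subRight_nhdsNE.le.trans_eq (by rw [sub_self])
  refine ((tendsto_stickelbergerDefect_zero hs).comp hshift).congr' ?_
  have hreg := mem_codiscrete_iff_forall_mem_nhdsNE.mp (regularSummands_mem_codiscrete L s) l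
  filter_upwards [hreg] with a ha
  simpa [sub_eq_add_neg] using stickelbergerDefect_add ha (neg_mem hl)

lemma tendsto_stickelbergerDefect_of_notMem_regularSummands (hs : s ∉ L.lattice) {z : ℂ}
    (hz : z ∉ regularSummands L s) : Tendsto (stickelbergerDefect L s) (𝓝[≠] z) (𝓝 0) := by
  by_cases hzΛ : z ∈ L.lattice
  · exact tendsto_stickelbergerDefect_of_mem_lattice hs hzΛ
  have hszΛ : s - z ∈ L.lattice := not_not.mp fun h ↦ hz ⟨hzΛ, h⟩
  exact ((tendsto_stickelbergerDefect_of_mem_lattice hs hszΛ).comp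
    (map_subLeft_nhdsNE (c := s) (a := z)).le).congr stickelbergerDefect_sub

lemma eqOn_stickelbergerDefect_zero (hs : s ∉ L.lattice) :
    Set.EqOn (stickelbergerDefect L s) 0 (regularSummands L s) :=
  eqOn_zero_of_periodic_of_tendsto_zero L.lattice (regularSummands_mem_codiscrete L s)
    (fun _ ha _ hl ↦ add_mem_regularSummands ha hl) ⟨0, fun h ↦ h.1 (zero_mem _)⟩
    (fun _ ha ↦ (hasDerivAt_stickelbergerDefect ha).differentiableAt.differentiableWithinAt)
    (fun _ ha _ hl ↦ stickelbergerDefect_add ha hl)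
    (fun _ hz ↦ tendsto_stickelbergerDefect_of_notMem_regularSummands hs hz)

end FrobeniusStickelberger

theorem weierstrassZeta_add_sub_sub_mul (L : PeriodPair) {a b : ℂ} (ha : a ∉ L.lattice)
    (hb : b ∉ L.lattice) (hab : a + b ∉ L.lattice) :
    (weierstrassZeta L (a + b) - weierstrassZeta L a - weierstrassZeta L b) * (℘[L] a - ℘[L] b)
      = (℘'[L] a - ℘'[L] b) / 2 := by
  have hmem : a ∈ regularSummands L (a + b) := ⟨ha, by rwa [add_sub_cancel_left]⟩
  have hopen : IsOpen (regularSummands L (a + b)) :=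
    (mem_codiscrete'.mp (regularSummands_mem_codiscrete L _)).1
  have hzero : stickelbergerDefect L (a + b) =ᶠ[𝓝 a] fun _ ↦ 0 :=
    (eqOn_stickelbergerDefect_zero hab).eventuallyEq_of_mem (hopen.mem_nhds hmem)
  have hderiv := (hasDerivAt_stickelbergerDefect hmem).unique
    ((hasDerivAt_const a 0).congr_of_eventuallyEq hzero)
  rw [add_sub_cancel_left] at hderiv
  linear_combination hderiv / 2

section Normalized

variable (L : PeriodPair) (c : ℂ)

/-- The Weierstrass zeta function corrected by a linear term; the paper's `ζ₂` is the case
`c = ζ(iδ) / (iδ)`. -/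
def normalizedZeta (z : ℂ) : ℂ := weierstrassZeta L z - c * z

/-- The Weierstrass `℘`-function corrected by a constant so that it is minus the derivative of
`normalizedZeta L c`; the paper's `℘₂` is the case `c = ζ(iδ) / (iδ)`. -/
def normalizedP (z : ℂ) : ℂ := ℘[L] z + c

/-- The function `ζ² - ℘` formed from the corrected functions, whose double pole at the origin
cancels; the paper's `f₂` is the case `c = ζ(iδ) / (iδ)`. -/
def normalizedF (z : ℂ) : ℂ := normalizedZeta L c z ^ 2 - normalizedP L c z

lemma hasDerivAt_normalizedZeta {z : ℂ} (hz : z ∉ L.lattice) :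
    HasDerivAt (normalizedZeta L c) (-normalizedP L c z) z := by
  refine ((hasDerivAt_weierstrassZeta L hz).sub
    ((hasDerivAt_id z).const_mul c)).congr_deriv ?_
  rw [normalizedP]
  ring

lemma hasDerivAt_normalizedF {z : ℂ} (hz : z ∉ L.lattice) :
    HasDerivAt (normalizedF L c) (-2 * normalizedZeta L c z * normalizedP L c z - ℘'[L] z) z := by
  refine (((hasDerivAt_normalizedZeta L c hz).pow 2).sub
    ((hasDerivAt_weierstrassP L hz).add_const c)).congr_deriv ?_
  simp

theorem zeta2_wp2_three_point_general {u v w : ℂ} (huv : u - v ∉ L.lattice)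
    (huw : u - w ∉ L.lattice) (hvw : v - w ∉ L.lattice) :
    (normalizedZeta L c (u - w) - normalizedZeta L c (v - w)) * normalizedP L c (u - v)
      = -((normalizedZeta L c (u - v) - normalizedZeta L c (u - w)) * normalizedP L c (v - w))
        - (1/2 : ℂ) * (deriv (normalizedF L c) (u - v) - deriv (normalizedF L c) (v - w)) := by
  have hadd := weierstrassZeta_add_sub_sub_mul L huv hvw (by rwa [sub_add_sub_cancel])
  rw [sub_add_sub_cancel] at hadd
  rw [(hasDerivAt_normalizedF L c huv).deriv, (hasDerivAt_normalizedF L c hvw).deriv]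
  simp only [normalizedZeta, normalizedP]
  linear_combination hadd

end Normalized

section Rectangular

variable {ℓ δ : ℝ}

/-- The periods `2ℓ` and `2iδ` of the rectangular lattice `Lambda ℓ δ`. -/
def rectPeriodPair (hℓ : ℓ ≠ 0) (hδ : δ ≠ 0) : PeriodPair where
  ω₁ := 2 * (ℓ : ℂ)
  ω₂ := 2 * ((δ : ℂ) * Complex.I)
  indep := LinearIndependent.pair_iff.mpr fun s t h ↦
    ⟨by simpa [hℓ] using congrArg Complex.re h, by simpa [hδ] using congrArg Complex.im h⟩

/-- The slope `ζ(iδ) / (iδ)` of the linear term of `ζ₂`. -/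
def zeta2Slope (ℓ δ : ℝ) : ℂ := wZeta ℓ δ ((δ : ℂ) * Complex.I) / ((δ : ℂ) * Complex.I)

variable (hℓ : ℓ ≠ 0) (hδ : δ ≠ 0)

lemma mem_lattice_rectPeriodPair {z : ℂ} :
    z ∈ (rectPeriodPair hℓ hδ).lattice ↔ z ∈ Lambda ℓ δ := by
  simp only [PeriodPair.mem_lattice, Lambda, rectPeriodPair, Set.mem_ofPred_eq, eq_comm (a := z)]
  refine exists₂_congr fun n m ↦ ?_
  rw [mul_left_comm, mul_assoc, mul_left_comm (m : ℂ), mul_assoc]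

lemma tsum_latticePts (f : ℂ → ℂ) :
    ∑' ω : latticePts ℓ δ, f ω
      = ∑' l : (rectPeriodPair hℓ hδ).lattice, if l.1 = 0 then 0 else f l := by
  classical
  have hset : ((rectPeriodPair hℓ hδ).lattice : Set ℂ) = Lambda ℓ δ :=
    Set.ext fun _ ↦ mem_lattice_rectPeriodPair hℓ hδ
  calc ∑' ω : latticePts ℓ δ, f ω = ∑' z, (Lambda ℓ δ \ {0}).indicator f z :=
        _root_.tsum_subtype _ f
    _ = ∑' z, (Lambda ℓ δ).indicator (fun z ↦ if z = 0 then 0 else f z) z := by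
        refine tsum_congr fun z ↦ ?_
        by_cases hz : z = 0 <;> simp [Set.indicator_apply, Set.mem_sdiff, hz]
    _ = ∑' l : (rectPeriodPair hℓ hδ).lattice, if l.1 = 0 then 0 else f l := by
        rw [← hset]
        exact (_root_.tsum_subtype _ _).symm

lemma wZeta_eq_weierstrassZeta : wZeta ℓ δ = weierstrassZeta (rectPeriodPair hℓ hδ) := by
  ext z
  rw [wZeta, tsum_latticePts hℓ hδ fun ω ↦ 1 / (z - ω) + 1 / ω + z / ω ^ 2]
  rfl

lemma wP_eq_weierstrassP : wP ℓ δ = ℘[rectPeriodPair hℓ hδ] := by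
  ext z
  rw [wP, tsum_latticePts hℓ hδ fun ω ↦ 1 / (z - ω) ^ 2 - 1 / ω ^ 2,
    weierstrassP_eq_one_div_sq_add]
  rfl

lemma zeta2_eq_normalizedZeta :
    zeta2 ℓ δ = normalizedZeta (rectPeriodPair hℓ hδ) (zeta2Slope ℓ δ) := by
  ext z
  rw [zeta2, normalizedZeta, zeta2Slope, ← wZeta_eq_weierstrassZeta hℓ hδ]

lemma wp2_eq_normalizedP :
    wp2 ℓ δ = normalizedP (rectPeriodPair hℓ hδ) (zeta2Slope ℓ δ) := by
  ext z
  rw [wp2, normalizedP, zeta2Slope, ← wP_eq_weierstrassP hℓ hδ]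

lemma f2_eq_normalizedF : f2 ℓ δ = normalizedF (rectPeriodPair hℓ hδ) (zeta2Slope ℓ δ) := by
  ext z
  rw [f2, normalizedF, zeta2_eq_normalizedZeta hℓ hδ, wp2_eq_normalizedP hℓ hδ]

end Rectangular

/-- The three-point identity for `ζ₂`, `℘₂` and `f₂′`. -/
theorem zeta2_wp2_three_point
    (ℓ δ : ℝ) (hℓ : 0 < ℓ) (hδ : 0 < δ)
    (u v w : ℂ) (huv : u - v ∉ Lambda ℓ δ) (huw : u - w ∉ Lambda ℓ δ)
    (hvw : v - w ∉ Lambda ℓ δ) :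
    (zeta2 ℓ δ (u - w) - zeta2 ℓ δ (v - w)) * wp2 ℓ δ (u - v)
      = -((zeta2 ℓ δ (u - v) - zeta2 ℓ δ (u - w)) * wp2 ℓ δ (v - w))
        - (1/2 : ℂ) * (deriv (f2 ℓ δ) (u - v) - deriv (f2 ℓ δ) (v - w)) := by
  rw [← mem_lattice_rectPeriodPair hℓ.ne' hδ.ne'] at huv huw hvw
  rw [zeta2_eq_normalizedZeta hℓ.ne' hδ.ne', wp2_eq_normalizedP hℓ.ne' hδ.ne',
    f2_eq_normalizedF hℓ.ne' hδ.ne']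
  exact zeta2_wp2_three_point_general _ _ huv huw hvw

end
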